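/- Let M ≥ 1, n ≥ 1, k > 0, α_0,...,α_M > 0 with α = Σ_{d=0}^M α_d, c_1 = (1/α)Σ_{d=0}^M d·α_d, and c_2 = (1/α)Σ_{d=0}^M d²·α_d. Let T ∼ Dirichlet(α_0,...,α_M), and conditionally on T = t let (n_0,...,n_M) ∼ Multinomial(n, t) with Z = (1/n)Σ_{d=0}^M d·n_d and posterior Bayes action a_X = (α·c_1 + n·Z)/(α+n). Then the expected posterior Bayes risk satisfies E_T E_{(n_0,...,n_M)|T}[Σ_{d=0}^M T_d · k·(d − a_X)²] = k(c_2 − c_1²)·α(1+α+n)/((1+α)(n+α)). -/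

import Mathlib

/-!
Averaging first over the counts at a fixed data distribution `t`, the quadratic loss only sees the
mean and the second moment of `∑ d n_d` under the multinomial distribution (`multWeight_moments`,
by differentiating the moment generating function). The outcome is an affine combination of
`∑ d² t_d`, `∑ d t_d` and `(∑ d t_d)²` (`sum_multWeight_risk`), whose Dirichlet expectations are
`dirDensity_linear` and `dirDensity_square`; the theorem is then a rational identity in
`α, n, c₁, c₂`.

Dirichlet moments reduce to the total mass by size-biasing (`dirDensity_mul`): multiplying the
density by `t_i` raises the parameter `α_i` by one. The total mass is Dirichlet's integral
(`lintegral_simplexWeight`), proved by computing `∏ Γ(b_d)` as an integral over the positive orthant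
sliced along `∑ u_d = s`. It is done with lower Lebesgue integrals, so that Tonelli applies with no
integrability conditions and the integrability of the density is a consequence.
-/

open MeasureTheory

/-! ### Dirichlet's integral -/

/-- Tonelli for a product of functions of separate real variables. -/
theorem lintegral_pi_prod {m : ℕ} (f : Fin m → ℝ → ENNReal) (hf : ∀ i, Measurable (f i)) :
    ∫⁻ x : Fin m → ℝ, ∏ i, f i (x i) = ∏ i, ∫⁻ v, f i v := by
  induction m with
  | zero => simp [volume_pi]
  | succ m ih =>
    have hP : Measurable fun y : Fin m → ℝ => ∏ i, f i.succ (y i) := by fun_prop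
    rw [← ((volume_preserving_piFinSuccAbove (fun _ : Fin (m + 1) => ℝ) 0).symm).lintegral_comp_emb
      (MeasurableEquiv.measurableEmbedding _)]
    simp_rw [MeasurableEquiv.piFinSuccAbove_symm_apply, Fin.insertNthEquiv,
      Fin.prod_univ_succ, Fin.insertNth_zero, Equiv.coe_fn_mk, Fin.cons_succ,
      Fin.cons_zero]
    rw [Measure.volume_eq_prod, ← ih (fun i => f i.succ) fun i => hf _]
    exact lintegral_prod_mul (hf 0).aemeasurable hP.aemeasurable

/-- The power weight `v ↦ v ^ (b - 1)` on `[0, ∞)`, extended by zero to the negative reals. -/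
noncomputable def powWeight (b v : ℝ) : ENNReal :=
  (Set.Ici (0 : ℝ)).indicator (fun v => ENNReal.ofReal (v ^ (b - 1))) v

@[fun_prop]
theorem measurable_powWeight (b : ℝ) : Measurable (powWeight b) := by
  unfold powWeight
  exact Measurable.indicator (by fun_prop) measurableSet_Ici

theorem powWeight_of_neg (b : ℝ) {v : ℝ} (hv : v < 0) : powWeight b v = 0 := by
  simp [powWeight, hv]

theorem powWeight_of_nonneg (b : ℝ) {v : ℝ} (hv : 0 ≤ v) :
    powWeight b v = ENNReal.ofReal (v ^ (b - 1)) := by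
  simp [powWeight, hv]

theorem powWeight_mul (b : ℝ) {s : ℝ} (hs : 0 < s) (v : ℝ) :
    powWeight b (s * v) = ENNReal.ofReal (s ^ (b - 1)) * powWeight b v := by
  rcases lt_or_ge v 0 with hv | hv
  · rw [powWeight_of_neg b hv, powWeight_of_neg b (mul_neg_of_pos_of_neg hs hv), mul_zero]
  · rw [powWeight_of_nonneg b hv, powWeight_of_nonneg b (by positivity),
      Real.mul_rpow hs.le hv, ENNReal.ofReal_mul (by positivity)]

theorem lintegral_powWeight_exp {b : ℝ} (hb : 0 < b) :
    ∫⁻ v, powWeight b v * ENNReal.ofReal (Real.exp (-v)) = ENNReal.ofReal (Real.Gamma b) := by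
  rw [Real.Gamma_eq_integral hb, ofReal_integral_eq_lintegral_ofReal
    (Real.GammaIntegral_convergent hb)
    ((ae_restrict_iff' measurableSet_Ioi).2 (Filter.Eventually.of_forall fun x hx => by
      have : (0 : ℝ) < x := hx
      positivity)), ← lintegral_indicator measurableSet_Ioi]
  apply lintegral_congr_ae
  filter_upwards [compl_mem_ae_iff.2 (measure_singleton (0 : ℝ))] with v hv
  rcases lt_or_gt_of_ne (show v ≠ 0 from hv) with h | h
  · simp [powWeight_of_neg b h, h.le]
  · rw [powWeight_of_nonneg b h.le, Set.indicator_of_mem (by exact h), mul_comm,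
      ENNReal.ofReal_mul (by positivity)]

/-- The unnormalised Dirichlet density on the hyperplane `∑ t = s`, in the coordinates
`t₁, …, t_M`, extended by zero to points with a negative coordinate. -/
noncomputable def simplexWeight {M : ℕ} (b : Fin (M + 1) → ℝ) (s : ℝ) (x : Fin M → ℝ) : ENNReal :=
  powWeight (b 0) (s - ∑ j, x j) * ∏ j : Fin M, powWeight (b j.succ) (x j)

theorem simplexWeight_of_neg {M : ℕ} (b : Fin (M + 1) → ℝ) {s : ℝ} (hs : s < 0) (x : Fin M → ℝ) :
    simplexWeight b s x = 0 := by
  unfold simplexWeight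
  by_cases h : ∀ j, 0 ≤ x j
  · rw [powWeight_of_neg, zero_mul]
    have := Finset.sum_nonneg fun j (_ : j ∈ Finset.univ) => h j
    linarith
  · push Not at h
    obtain ⟨j, hj⟩ := h
    rw [Finset.prod_eq_zero (Finset.mem_univ j) (powWeight_of_neg _ hj), mul_zero]

/-- Homogeneity of the unnormalised Dirichlet density. -/
theorem simplexWeight_smul {M : ℕ} (b : Fin (M + 1) → ℝ) {s : ℝ} (hs : 0 < s) (x : Fin M → ℝ) :
    simplexWeight b s (s • x) =
      ENNReal.ofReal (s ^ (∑ d, (b d - 1))) * simplexWeight b 1 x := by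
  have h1 : s - ∑ j, (s • x) j = s * (1 - ∑ j, x j) := by
    simp [mul_sub, Finset.mul_sum]
  unfold simplexWeight
  rw [h1, powWeight_mul _ hs]
  simp only [Pi.smul_apply, smul_eq_mul, powWeight_mul _ hs]
  rw [Finset.prod_mul_distrib, Fin.sum_univ_succ, Real.rpow_add hs,
    ENNReal.ofReal_mul (by positivity), Real.rpow_sum_of_pos hs,
    ENNReal.ofReal_prod_of_nonneg (fun i _ => by positivity)]
  ring

/-- The mass of the simplex of size `s` is `s ^ (∑ b - 1)` times that of the unit simplex: the
homogeneity of the density gives the exponent `∑ b - (M + 1)` and the Jacobian of scaling in `ℝ^M`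
supplies the remaining `M`. -/
theorem lintegral_simplexWeight_of_pos {M : ℕ} (b : Fin (M + 1) → ℝ) {s : ℝ} (hs : 0 < s) :
    ∫⁻ x, simplexWeight b s x =
      powWeight (∑ d, b d) s * ∫⁻ x, simplexWeight b 1 x := by
  have hm : Measurable fun x : Fin M → ℝ => s • x := by fun_prop
  have hw : ∀ s, Measurable (simplexWeight b s) := fun s => by unfold simplexWeight; fun_prop
  have h := lintegral_map (μ := volume) (hw s) hm
  rw [Measure.map_addHaar_smul volume hs.ne', lintegral_smul_measure] at h
  simp only [simplexWeight_smul b hs, Module.finrank_fin_fun, smul_eq_mul] at h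
  rw [lintegral_const_mul _ (hw 1)] at h
  have h2 : ENNReal.ofReal (s ^ M) * ENNReal.ofReal |(s ^ M)⁻¹| = 1 := by
    rw [← ENNReal.ofReal_mul (by positivity), abs_of_pos (by positivity),
      mul_inv_cancel₀ (by positivity), ENNReal.ofReal_one]
  calc ∫⁻ x, simplexWeight b s x
      = ENNReal.ofReal (s ^ M) * (ENNReal.ofReal |(s ^ M)⁻¹| * ∫⁻ x, simplexWeight b s x) := by
        rw [← mul_assoc, h2, one_mul]
    _ = _ := by
      rw [h, ← mul_assoc, ← ENNReal.ofReal_mul (by positivity), powWeight_of_nonneg _ hs.le,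
        ← Real.rpow_natCast, ← Real.rpow_add hs]
      congr 3
      simp [Finset.sum_sub_distrib]
      ring

/-- Dirichlet's integral. The product of the `Γ(b_d)` is an integral over the positive orthant;
replacing the coordinate `u₀` by the sum `s` of all coordinates slices the orthant into scaled
simplices, and homogeneity turns the slice integrals into the density of `Γ(∑ b)`. -/
theorem lintegral_simplexWeight {M : ℕ} (b : Fin (M + 1) → ℝ) (hb : ∀ d, 0 < b d) :
    ENNReal.ofReal (Real.Gamma (∑ d, b d)) * ∫⁻ x, simplexWeight b 1 x =
      ∏ d, ENNReal.ofReal (Real.Gamma (b d)) := by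
  have hB : 0 < ∑ d, b d := Finset.sum_pos (fun d _ => hb d) Finset.univ_nonempty
  set P : (Fin M → ℝ) → ENNReal := fun x =>
    ∏ j : Fin M, (powWeight (b j.succ) (x j) * ENNReal.ofReal (Real.exp (-(x j)))) with hPdef
  have hP : Measurable P := by fun_prop
  set g : ℝ → ENNReal := fun u => powWeight (b 0) u * ENNReal.ofReal (Real.exp (-u)) with hgdef
  have hg : Measurable g := by fun_prop
  symm
  calc ∏ d, ENNReal.ofReal (Real.Gamma (b d))
      = (∫⁻ u, g u) * ∫⁻ x, P x := by
        rw [hPdef, lintegral_pi_prod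
          (fun j v => powWeight (b j.succ) v * ENNReal.ofReal (Real.exp (-v)))
          (fun j => by fun_prop), Fin.prod_univ_succ, lintegral_powWeight_exp (hb 0)]
        simp only [lintegral_powWeight_exp (hb _)]
    _ = ∫⁻ x, ∫⁻ s, g (s - ∑ j, x j) * P x := by
        rw [← lintegral_const_mul _ hP]
        refine lintegral_congr fun x => ?_
        rw [lintegral_mul_const _ (by fun_prop), lintegral_sub_right_eq_self g]
    _ = ∫⁻ s, ∫⁻ x, g (s - ∑ j, x j) * P x :=
        lintegral_lintegral_swap (by
          apply Measurable.aemeasurable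
          simp only [Function.uncurry_def]
          fun_prop)
    _ = ∫⁻ s, ∫⁻ x, ENNReal.ofReal (Real.exp (-s)) * simplexWeight b s x := by
        refine lintegral_congr fun s => lintegral_congr fun x => ?_
        have he : Real.exp (-s) =
            Real.exp (-(s - ∑ j, x j)) * ∏ j, Real.exp (-(x j)) := by
          rw [← Real.exp_sum, ← Real.exp_add, Finset.sum_neg_distrib]
          ring_nf
        rw [he, ENNReal.ofReal_mul (by positivity),
          ENNReal.ofReal_prod_of_nonneg (fun i _ => by positivity)]
        simp only [hPdef, hgdef, simplexWeight, Finset.prod_mul_distrib]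
        ring
    _ = ∫⁻ s, (powWeight (∑ d, b d) s * ENNReal.ofReal (Real.exp (-s))) *
          ∫⁻ x, simplexWeight b 1 x := by
        apply lintegral_congr_ae
        filter_upwards [compl_mem_ae_iff.2 (measure_singleton (0 : ℝ))] with s hs
        rw [lintegral_const_mul _ (by unfold simplexWeight; fun_prop)]
        rcases lt_or_gt_of_ne (show s ≠ 0 from hs) with h | h
        · simp [simplexWeight_of_neg b h, powWeight_of_neg _ h]
        · rw [lintegral_simplexWeight_of_pos b h]
          ring
    _ = _ := by
        rw [lintegral_mul_const _ (by fun_prop), lintegral_powWeight_exp hB]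

/-! ### Dirichlet distribution on the simplex -/

/-- The standard simplex, parameterised by `(t₁, …, t_M)`. -/
def simplexSet (M : ℕ) : Set (Fin M → ℝ) := {x | (∀ j, 0 ≤ x j) ∧ ∑ j, x j ≤ 1}

/-- The barycentric coordinates `(t₀, …, t_M)` of a point, with `t₀ = 1 - ∑_{d ≥ 1} t_d`. -/
def bary {M : ℕ} (x : Fin M → ℝ) : Fin (M + 1) → ℝ := Fin.cons (1 - ∑ j, x j) x

theorem measurableSet_simplexSet (M : ℕ) : MeasurableSet (simplexSet M) := by
  have h : simplexSet M = (⋂ j, {x | 0 ≤ x j}) ∩ {x | ∑ j, x j ≤ 1} := by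
    ext x
    simp [simplexSet]
  rw [h]
  exact (MeasurableSet.iInter fun j => measurableSet_le (by fun_prop) (by fun_prop)).inter
    (measurableSet_le (by fun_prop) (by fun_prop))

@[fun_prop]
theorem measurable_bary (M : ℕ) : Measurable (bary : (Fin M → ℝ) → _) := by
  refine measurable_pi_iff.2 fun d => ?_
  refine Fin.cases ?_ (fun j => ?_) d
  · simp only [bary, Fin.cons_zero]
    fun_prop
  · simp only [bary, Fin.cons_succ]
    fun_prop

theorem bary_nonneg {M : ℕ} {x : Fin M → ℝ} (hx : x ∈ simplexSet M) (d : Fin (M + 1)) :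
    0 ≤ bary x d := by
  refine Fin.cases ?_ (fun j => ?_) d
  · simpa [bary] using hx.2
  · simpa [bary] using hx.1 j

theorem sum_bary {M : ℕ} (x : Fin M → ℝ) : ∑ d, bary x d = 1 := by
  simp [bary, Fin.sum_univ_succ]

/-- The Dirichlet density with parameters `b`, as a function of all the coordinates `t₀, …, t_M`. -/
noncomputable def dirDensity {M : ℕ} (b t : Fin (M + 1) → ℝ) : ℝ :=
  (Real.Gamma (∑ d, b d) / ∏ d, Real.Gamma (b d)) * ∏ d, t d ^ (b d - 1)

theorem indicator_eq_simplexWeight {M : ℕ} (b : Fin (M + 1) → ℝ) (x : Fin M → ℝ) :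
    (simplexSet M).indicator (fun x => ENNReal.ofReal (∏ d, bary x d ^ (b d - 1))) x =
      simplexWeight b 1 x := by
  by_cases hx : x ∈ simplexSet M
  · rw [Set.indicator_of_mem hx, ENNReal.ofReal_prod_of_nonneg
      (fun d _ => Real.rpow_nonneg (bary_nonneg hx d) _), Fin.prod_univ_succ, simplexWeight,
      powWeight_of_nonneg _ (by linarith [hx.2])]
    simp only [powWeight_of_nonneg _ (hx.1 _)]
    simp [bary]
  · rw [Set.indicator_of_notMem hx, simplexWeight]
    by_cases h : ∀ j, 0 ≤ x j
    · have h1 : ¬ ∑ j, x j ≤ 1 := fun h1 => hx ⟨h, h1⟩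
      rw [powWeight_of_neg _ (by linarith), zero_mul]
    · push Not at h
      obtain ⟨j, hj⟩ := h
      rw [Finset.prod_eq_zero (Finset.mem_univ j) (powWeight_of_neg _ hj), mul_zero]

/-- The Dirichlet density is integrable on the simplex with total mass one. This is
`lintegral_simplexWeight` transferred to the Bochner integral. -/
theorem dirDensity_integral {M : ℕ} (b : Fin (M + 1) → ℝ) (hb : ∀ d, 0 < b d) :
    IntegrableOn (fun x => dirDensity b (bary x)) (simplexSet M) ∧
      ∫ x in simplexSet M, dirDensity b (bary x) = 1 := by
  have hS := measurableSet_simplexSet M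
  have hB : 0 < Real.Gamma (∑ d, b d) :=
    Real.Gamma_pos_of_pos (Finset.sum_pos (fun d _ => hb d) Finset.univ_nonempty)
  have hG : 0 < ∏ d, Real.Gamma (b d) :=
    Finset.prod_pos fun d _ => Real.Gamma_pos_of_pos (hb d)
  have hlin : ∫⁻ x in simplexSet M, ENNReal.ofReal (∏ d, bary x d ^ (b d - 1)) =
      ENNReal.ofReal ((∏ d, Real.Gamma (b d)) / Real.Gamma (∑ d, b d)) := by
    rw [← lintegral_indicator hS]
    simp only [indicator_eq_simplexWeight]
    rw [ENNReal.ofReal_div_of_pos hB, ENNReal.eq_div_iff (by simpa using hB) (by simp),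
      lintegral_simplexWeight b hb,
      ENNReal.ofReal_prod_of_nonneg fun d _ => (Real.Gamma_pos_of_pos (hb d)).le]
  have hmeas : AEStronglyMeasurable (fun x : Fin M → ℝ => ∏ d, bary x d ^ (b d - 1))
      (volume.restrict (simplexSet M)) := by
    apply Measurable.aestronglyMeasurable
    fun_prop
  have hnn : 0 ≤ᵐ[volume.restrict (simplexSet M)]
      fun x : Fin M → ℝ => ∏ d, bary x d ^ (b d - 1) :=
    (ae_restrict_iff' hS).2 (Filter.Eventually.of_forall fun x hx =>
      Finset.prod_nonneg fun d _ => Real.rpow_nonneg (bary_nonneg hx d) _)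
  have hint : IntegrableOn (fun x : Fin M → ℝ => ∏ d, bary x d ^ (b d - 1)) (simplexSet M) :=
    ⟨hmeas, (hasFiniteIntegral_iff_ofReal hnn).2 (by rw [hlin]; exact ENNReal.ofReal_lt_top)⟩
  refine ⟨hint.const_mul _, ?_⟩
  simp only [dirDensity]
  rw [integral_const_mul, integral_eq_lintegral_of_nonneg_ae hnn hmeas, hlin,
    ENNReal.toReal_ofReal (by positivity)]
  field_simp

/-- The parameter vector `b` with its `i`-th entry raised by one. -/
noncomputable def bump {M : ℕ} (b : Fin (M + 1) → ℝ) (i : Fin (M + 1)) : Fin (M + 1) → ℝ :=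
  b + Pi.single i 1

theorem bump_same {M : ℕ} (b : Fin (M + 1) → ℝ) (i : Fin (M + 1)) : bump b i i = b i + 1 := by
  simp [bump]

theorem bump_of_ne {M : ℕ} (b : Fin (M + 1) → ℝ) {i d : Fin (M + 1)} (h : d ≠ i) :
    bump b i d = b d := by
  simp [bump, h]

theorem sum_bump {M : ℕ} (b : Fin (M + 1) → ℝ) (i : Fin (M + 1)) :
    ∑ d, bump b i d = (∑ d, b d) + 1 := by
  simp [bump, Finset.sum_add_distrib]

/-- Size-biasing: multiplying the Dirichlet density by a coordinate gives, up to the factor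
`b i / ∑ b`, the Dirichlet density with that parameter raised by one. The identity holds also on
the boundary `t i = 0`, where both sides vanish. -/
theorem dirDensity_mul {M : ℕ} (b : Fin (M + 1) → ℝ) (hb : ∀ d, 0 < b d)
    {t : Fin (M + 1) → ℝ} (ht : ∀ d, 0 ≤ t d) (i : Fin (M + 1)) :
    dirDensity b t * t i = b i / (∑ d, b d) * dirDensity (bump b i) t := by
  have hB : 0 < ∑ d, b d := Finset.sum_pos (fun d _ => hb d) Finset.univ_nonempty
  -- For `t i = 0` the case `b i = 1` is covered too: both sides are `0`, since `b i ≠ 0`.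
  have hpow : t i ^ (b i - 1) * t i = t i ^ (b i) := by
    rcases (ht i).eq_or_lt with h | h
    · rw [← h, mul_zero, Real.zero_rpow (hb i).ne']
    · rw [← Real.rpow_add_one h.ne', sub_add_cancel]
  have hsplit : ∀ g : Fin (M + 1) → ℝ, ∏ d, g d = g i * ∏ d ∈ Finset.univ.erase i, g d :=
    fun g => (Finset.mul_prod_erase _ _ (Finset.mem_univ i)).symm
  have h1 : ∏ d ∈ Finset.univ.erase i, t d ^ (bump b i d - 1) =
      ∏ d ∈ Finset.univ.erase i, t d ^ (b d - 1) :=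
    Finset.prod_congr rfl fun d hd => by rw [bump_of_ne b (Finset.ne_of_mem_erase hd)]
  have h2 : ∏ d ∈ Finset.univ.erase i, Real.Gamma (bump b i d) =
      ∏ d ∈ Finset.univ.erase i, Real.Gamma (b d) :=
    Finset.prod_congr rfl fun d hd => by rw [bump_of_ne b (Finset.ne_of_mem_erase hd)]
  have h3 : ∏ d ∈ Finset.univ.erase i, Real.Gamma (b d) ≠ 0 :=
    (Finset.prod_pos fun d _ => Real.Gamma_pos_of_pos (hb d)).ne'
  have h4 := (Real.Gamma_pos_of_pos (hb i)).ne'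
  have h5 := (hb i).ne'
  unfold dirDensity
  rw [sum_bump, Real.Gamma_add_one hB.ne', hsplit fun d => Real.Gamma (bump b i d), h2,
    hsplit fun d => t d ^ (bump b i d - 1), h1, hsplit fun d => Real.Gamma (b d),
    hsplit fun d => t d ^ (b d - 1)]
  simp only [bump_same, add_sub_cancel_right]
  rw [Real.Gamma_add_one h5, ← hpow]
  field_simp

theorem bump_pos {M : ℕ} {b : Fin (M + 1) → ℝ} (hb : ∀ d, 0 < b d) (i d : Fin (M + 1)) :
    0 < bump b i d := by
  have := hb d
  by_cases h : d = i
  · rw [h, bump_same]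
    linarith [hb i]
  · rwa [bump_of_ne b h]

theorem dirDensity_moment_one {M : ℕ} (b : Fin (M + 1) → ℝ) (hb : ∀ d, 0 < b d)
    (i : Fin (M + 1)) :
    IntegrableOn (fun x => dirDensity b (bary x) * bary x i) (simplexSet M) ∧
      ∫ x in simplexSet M, dirDensity b (bary x) * bary x i = b i / ∑ d, b d := by
  have hS := measurableSet_simplexSet M
  have heq : Set.EqOn (fun x => dirDensity b (bary x) * bary x i)
      (fun x => b i / (∑ d, b d) * dirDensity (bump b i) (bary x)) (simplexSet M) :=
    fun x hx => dirDensity_mul b hb (bary_nonneg hx) i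
  obtain ⟨h1, h2⟩ := dirDensity_integral _ (bump_pos hb i)
  rw [integrableOn_congr_fun heq hS, setIntegral_congr_fun hS heq, integral_const_mul, h2, mul_one]
  exact ⟨h1.const_mul _, rfl⟩

theorem dirDensity_moment_two {M : ℕ} (b : Fin (M + 1) → ℝ) (hb : ∀ d, 0 < b d)
    (i j : Fin (M + 1)) :
    IntegrableOn (fun x => dirDensity b (bary x) * (bary x i * bary x j)) (simplexSet M) ∧
      ∫ x in simplexSet M, dirDensity b (bary x) * (bary x i * bary x j) =
        b i / (∑ d, b d) * ((b j + if j = i then 1 else 0) / ((∑ d, b d) + 1)) := by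
  have hS := measurableSet_simplexSet M
  have heq : Set.EqOn (fun x => dirDensity b (bary x) * (bary x i * bary x j))
      (fun x => b i / (∑ d, b d) * (dirDensity (bump b i) (bary x) * bary x j))
      (simplexSet M) := fun x hx => by
    simp only [← mul_assoc, dirDensity_mul b hb (bary_nonneg hx) i]
  obtain ⟨h1, h2⟩ := dirDensity_moment_one _ (bump_pos hb i) j
  rw [integrableOn_congr_fun heq hS, setIntegral_congr_fun hS heq, integral_const_mul, h2]
  refine ⟨h1.const_mul _, ?_⟩
  rw [sum_bump]
  simp [bump, Pi.single_apply]

/-- Mean of the linear statistic `∑ a_d T_d` under the Dirichlet distribution. -/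
theorem dirDensity_linear {M : ℕ} (b : Fin (M + 1) → ℝ) (hb : ∀ d, 0 < b d)
    (a : Fin (M + 1) → ℝ) :
    IntegrableOn (fun x => dirDensity b (bary x) * ∑ d, a d * bary x d) (simplexSet M) ∧
      ∫ x in simplexSet M, dirDensity b (bary x) * ∑ d, a d * bary x d =
        (∑ d, a d * b d) / ∑ d, b d := by
  have heq : ∀ x : Fin M → ℝ, dirDensity b (bary x) * ∑ d, a d * bary x d =
      ∑ d, a d * (dirDensity b (bary x) * bary x d) := fun x => by
    rw [Finset.mul_sum]
    exact Finset.sum_congr rfl fun d _ => by ring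
  have hi := fun d => ((dirDensity_moment_one b hb d).1).const_mul (a d)
  simp only [heq]
  refine ⟨integrable_finsetSum _ fun d _ => hi d, ?_⟩
  rw [integral_finsetSum _ fun d _ => hi d, Finset.sum_div]
  refine Finset.sum_congr rfl fun d _ => ?_
  rw [integral_const_mul, (dirDensity_moment_one b hb d).2, mul_div_assoc]

/-- Second moment of the linear statistic `∑ a_d T_d` under the Dirichlet distribution. -/
theorem dirDensity_square {M : ℕ} (b : Fin (M + 1) → ℝ) (hb : ∀ d, 0 < b d)
    (a : Fin (M + 1) → ℝ) :
    IntegrableOn (fun x => dirDensity b (bary x) * (∑ d, a d * bary x d) ^ 2) (simplexSet M) ∧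
      ∫ x in simplexSet M, dirDensity b (bary x) * (∑ d, a d * bary x d) ^ 2 =
        ((∑ d, a d * b d) ^ 2 + ∑ d, a d ^ 2 * b d) / ((∑ d, b d) * ((∑ d, b d) + 1)) := by
  have heq : ∀ x : Fin M → ℝ, dirDensity b (bary x) * (∑ d, a d * bary x d) ^ 2 =
      ∑ i, ∑ j, (a i * a j) * (dirDensity b (bary x) * (bary x i * bary x j)) := fun x => by
    rw [sq, Finset.sum_mul_sum, Finset.mul_sum]
    refine Finset.sum_congr rfl fun i _ => ?_
    rw [Finset.mul_sum]
    exact Finset.sum_congr rfl fun j _ => by ring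
  have hi := fun i j => ((dirDensity_moment_two b hb i j).1).const_mul (a i * a j)
  have hi' := fun i => integrable_finsetSum Finset.univ fun j _ => hi i j
  simp only [heq]
  refine ⟨integrable_finsetSum _ fun i _ => hi' i, ?_⟩
  rw [integral_finsetSum _ fun i _ => hi' i, sq, Finset.sum_mul_sum, ← Finset.sum_add_distrib,
    Finset.sum_div]
  refine Finset.sum_congr rfl fun i _ => ?_
  rw [integral_finsetSum _ fun j _ => hi i j]
  simp only [integral_const_mul, (dirDensity_moment_two b hb i _).2]
  have hsum : a i ^ 2 * b i = ∑ j, a i * a j * (b i * if j = i then 1 else 0) := by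
    simp [sq]
  rw [hsum, ← Finset.sum_add_distrib, Finset.sum_div]
  refine Finset.sum_congr rfl fun j _ => ?_
  rw [div_mul_div_comm]
  ring

/-! ### Multinomial moments -/

/-- The probability that the multinomial distribution with cell probabilities `t` gives to the
counts `c`; the number of trials is `∑ c`. -/
def multWeight {m : ℕ} (t : Fin m → ℝ) (c : Fin m → ℕ) : ℝ :=
  (Nat.multinomial Finset.univ c : ℝ) * ∏ d, t d ^ c d

/-- The moment generating function of `∑ a_d n_d` under the multinomial distribution: the
multinomial theorem at `t_d exp (s a_d)`. -/
theorem sum_multWeight_exp {m : ℕ} (n : ℕ) (t a : Fin m → ℝ) (s : ℝ) :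
    ∑ c ∈ Finset.Nat.antidiagonalTuple m n,
        multWeight t c * Real.exp (s * ∑ d, a d * (c d : ℝ)) =
      (∑ d, t d * Real.exp (s * a d)) ^ n := by
  have hset : Finset.Nat.antidiagonalTuple m n = Finset.piAntidiag Finset.univ n := by
    ext c
    simp [Finset.Nat.mem_antidiagonalTuple]
  rw [Finset.sum_pow_eq_sum_piAntidiag, hset]
  refine Finset.sum_congr rfl fun c _ => ?_
  simp only [multWeight, mul_pow, Finset.prod_mul_distrib, ← Real.exp_nat_mul]
  rw [← Real.exp_sum, Finset.mul_sum, mul_assoc]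
  congr 4
  funext d
  ring

/-- Total mass and first two moments of `∑ a_d n_d` under the multinomial distribution, obtained
by differentiating `sum_multWeight_exp` twice in `s` at `s = 0`. -/
theorem multWeight_moments {m n : ℕ} (hn : 1 ≤ n) (t a : Fin m → ℝ) (ht : ∑ d, t d = 1) :
    (∑ c ∈ Finset.Nat.antidiagonalTuple m n, multWeight t c = 1) ∧
    (∑ c ∈ Finset.Nat.antidiagonalTuple m n, multWeight t c * ∑ d, a d * (c d : ℝ) =
      n * ∑ d, a d * t d) ∧
    (∑ c ∈ Finset.Nat.antidiagonalTuple m n, multWeight t c * (∑ d, a d * (c d : ℝ)) ^ 2 =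
      n * (n - 1) * (∑ d, a d * t d) ^ 2 + n * ∑ d, a d ^ 2 * t d) := by
  have hexp : ∀ y s : ℝ, HasDerivAt (fun s => Real.exp (s * y)) (Real.exp (s * y) * y) s :=
    fun y s => by simpa using ((hasDerivAt_id s).mul_const y).exp
  have hF : ∀ s, HasDerivAt (fun s => ∑ d, t d * Real.exp (s * a d))
      (∑ d, t d * (Real.exp (s * a d) * a d)) s := fun s =>
    HasDerivAt.fun_sum fun d _ => (hexp _ _).const_mul _
  have hF' : ∀ s, HasDerivAt (fun s => ∑ d, t d * (Real.exp (s * a d) * a d))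
      (∑ d, t d * (Real.exp (s * a d) * a d * a d)) s := fun s =>
    HasDerivAt.fun_sum fun d _ => ((hexp _ _).mul_const _).const_mul _
  have hL := fun s => HasDerivAt.fun_sum (u := Finset.Nat.antidiagonalTuple m n)
    fun c _ => (hexp (∑ d, a d * (c d : ℝ)) s).const_mul (multWeight t c)
  have hL' := fun s => HasDerivAt.fun_sum (u := Finset.Nat.antidiagonalTuple m n)
    fun c _ => ((hexp (∑ d, a d * (c d : ℝ)) s).mul_const
      (∑ d, a d * (c d : ℝ))).const_mul (multWeight t c)
  simp only [sum_multWeight_exp] at hL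
  have h1 := funext fun s => (hL s).unique ((hF s).fun_pow n)
  rw [h1] at hL'
  have h2 := (hL' 0).unique ((((hF 0).fun_pow (n - 1)).const_mul (n : ℝ)).mul (hF' 0))
  have h0 := sum_multWeight_exp n t a 0
  have h1 := congrFun h1 0
  simp only [zero_mul, Real.exp_zero, mul_one, one_mul, ht, one_pow] at h0 h1 h2
  have hc : ((n - 1 : ℕ) : ℝ) = n - 1 := by push_cast [hn]; ring
  refine ⟨h0, ?_, ?_⟩
  · rw [h1]
    simp only [mul_comm]
  · rw [hc] at h2
    simp only [sq, ← mul_assoc] at h2 ⊢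
    rw [h2]
    have e1 : ∑ d, t d * a d = ∑ d, a d * t d := by simp only [mul_comm]
    have e2 : ∑ d, t d * a d * a d = ∑ d, a d * a d * t d :=
      Finset.sum_congr rfl fun d _ => by ring
    rw [e1, e2]

/-- The risk at a fixed data distribution `t`, averaged over the counts, for an action that is affine
in `∑ a_e n_e`: it depends on `t` only through `∑ a_d t_d` and `∑ a_d² t_d`. -/
theorem sum_multWeight_risk {m n : ℕ} (hn : 1 ≤ n) (t a : Fin m → ℝ) (ht : ∑ d, t d = 1)
    (k q w : ℝ) :
    ∑ c ∈ Finset.Nat.antidiagonalTuple m n, multWeight t c *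
        ∑ d, t d * (k * (a d - (q + ∑ e, a e * (c e : ℝ)) * w) ^ 2) =
      k * ((1 + n * w ^ 2) * ∑ d, a d ^ 2 * t d +
        (2 * q * n * w ^ 2 - 2 * q * w) * ∑ d, a d * t d +
        (n * (n - 1) * w ^ 2 - 2 * n * w) * (∑ d, a d * t d) ^ 2 + q ^ 2 * w ^ 2) := by
  obtain ⟨h0, h1, h2⟩ := multWeight_moments hn t a ht
  have hinner : ∀ y : ℝ, ∑ d, t d * (k * (a d - y) ^ 2) =
      k * (∑ d, a d ^ 2 * t d - 2 * y * ∑ d, a d * t d + y ^ 2) := fun y => by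
    calc ∑ d, t d * (k * (a d - y) ^ 2)
        = ∑ d, (k * (a d ^ 2 * t d) - k * (2 * y) * (a d * t d) + k * y ^ 2 * t d) :=
          Finset.sum_congr rfl fun d _ => by ring
      _ = _ := by
          rw [Finset.sum_add_distrib, Finset.sum_sub_distrib, ← Finset.mul_sum, ← Finset.mul_sum,
            ← Finset.mul_sum, ht]
          ring
  simp only [hinner]
  set m1 := ∑ d, a d * t d
  set m2 := ∑ d, a d ^ 2 * t d
  calc _ = ∑ c ∈ Finset.Nat.antidiagonalTuple m n,
          (k * (m2 - 2 * q * w * m1 + q ^ 2 * w ^ 2) * multWeight t c +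
            k * (2 * q * w ^ 2 - 2 * w * m1) * (multWeight t c * ∑ e, a e * (c e : ℝ)) +
            k * w ^ 2 * (multWeight t c * (∑ e, a e * (c e : ℝ)) ^ 2)) :=
        Finset.sum_congr rfl fun c _ => by ring
    _ = _ := by
        rw [Finset.sum_add_distrib, Finset.sum_add_distrib, ← Finset.mul_sum, ← Finset.mul_sum,
          ← Finset.mul_sum, h0, h1, h2]
        ring

/-! ### The expected risk -/

/-- expected posterior Bayes risk: with `T ∼ Dirichlet(α₀,…,α_M)`
(density with respect to Lebesgue measure on the simplex, parameterized by `(t₁,…,t_M)`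
with `t₀ = 1 − ∑_{d=1}^M t_d`) and, conditionally on `T = t`,
`(n₀,…,n_M) ∼ Multinomial(n, t)` with `Z = (1/n)∑ d·n_d` and posterior Bayes action
`a_X = (α·c₁ + n·Z)/(α+n)`, the expected posterior Bayes risk
`E_T E_{X|T}[∑ d, T_d·k·(d − a_X)²]` equals `k(c₂ − c₁²)·α(1+α+n)/((1+α)(n+α))`. -/
theorem expected_posterior_bayes_risk (M n : ℕ) (hM : 1 ≤ M) (hn : 1 ≤ n)
    (k : ℝ) (hk : 0 < k)
    (α : Fin (M + 1) → ℝ) (hα : ∀ d, 0 < α d)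
    (A c1 c2 : ℝ) (hA : A = ∑ d, α d)
    (hc1 : c1 = (1 / A) * ∑ d : Fin (M + 1), ((d : ℕ) : ℝ) * α d)
    (hc2 : c2 = (1 / A) * ∑ d : Fin (M + 1), ((d : ℕ) : ℝ) ^ 2 * α d)
    (Z : (Fin (M + 1) → ℕ) → ℝ)
    (hZ : ∀ c, Z c = (1 / (n : ℝ)) * ∑ d : Fin (M + 1), ((d : ℕ) : ℝ) * (c d : ℝ))
    (aX : (Fin (M + 1) → ℕ) → ℝ)
    (haX : ∀ c, aX c = (A * c1 + n * Z c) / (A + n)) :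
    (∫ x in {x : Fin M → ℝ | (∀ j, 0 ≤ x j) ∧ ∑ j, x j ≤ 1},
        ((Real.Gamma A / ∏ d, Real.Gamma (α d)) *
            ∏ d : Fin (M + 1),
              (Fin.cons (1 - ∑ j, x j) x : Fin (M + 1) → ℝ) d ^ (α d - 1)) *
          ∑ c ∈ Finset.Nat.antidiagonalTuple (M + 1) n,
            ((Nat.multinomial Finset.univ c : ℝ) *
                ∏ d : Fin (M + 1),
                  (Fin.cons (1 - ∑ j, x j) x : Fin (M + 1) → ℝ) d ^ c d) *
              ∑ d : Fin (M + 1),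
                (Fin.cons (1 - ∑ j, x j) x : Fin (M + 1) → ℝ) d *
                  (k * (((d : ℕ) : ℝ) - aX c) ^ 2))
      = k * (c2 - c1 ^ 2) * (A * (1 + A + n)) / ((1 + A) * (n + A)) := by
  have hApos : 0 < A := hA ▸ Finset.sum_pos (fun d _ => hα d) Finset.univ_nonempty
  have hn0 : (0 : ℝ) < n := by exact_mod_cast hn
  set a : Fin (M + 1) → ℝ := fun d => ((d : ℕ) : ℝ) with ha
  set w : ℝ := (A + n)⁻¹ with hw
  have haX' : ∀ c, aX c = (A * c1 + ∑ d, a d * (c d : ℝ)) * w := fun c => by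
    rw [haX, hZ, hw, ← div_eq_mul_inv]
    congr 2
    simp only [ha]
    field_simp
  have hm1 : ∑ d, a d * α d = A * c1 := by
    rw [hc1]
    simp only [ha]
    field_simp
  have hm2 : ∑ d, a d ^ 2 * α d = A * c2 := by
    rw [hc2]
    simp only [ha]
    field_simp
  obtain ⟨i0, e0⟩ := dirDensity_integral α hα
  obtain ⟨i1, e1⟩ := dirDensity_linear α hα a
  obtain ⟨i2, e2⟩ := dirDensity_linear α hα fun d => a d ^ 2
  obtain ⟨iq, eq⟩ := dirDensity_square α hα a
  rw [← hA, hm1] at e1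
  rw [← hA, hm2] at e2
  rw [← hA, hm1, hm2] at eq
  set q := A * c1
  -- Averaging over the counts first leaves a combination of four Dirichlet integrals.
  have hpt : ∀ x : Fin M → ℝ,
      dirDensity α (bary x) * (∑ c ∈ Finset.Nat.antidiagonalTuple (M + 1) n,
        multWeight (bary x) c * ∑ d, bary x d * (k * (a d - aX c) ^ 2)) =
      k * (1 + n * w ^ 2) * (dirDensity α (bary x) * ∑ d, a d ^ 2 * bary x d) +
        k * (2 * q * n * w ^ 2 - 2 * q * w) * (dirDensity α (bary x) * ∑ d, a d * bary x d) +
        k * (n * (n - 1) * w ^ 2 - 2 * n * w) *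
          (dirDensity α (bary x) * (∑ d, a d * bary x d) ^ 2) +
        k * (q ^ 2 * w ^ 2) * dirDensity α (bary x) := fun x => by
    simp only [haX']
    rw [sum_multWeight_risk hn (bary x) a (sum_bary x)]
    ring
  calc _ = ∫ x in simplexSet M,
        dirDensity α (bary x) * (∑ c ∈ Finset.Nat.antidiagonalTuple (M + 1) n,
          multWeight (bary x) c * ∑ d, bary x d * (k * (a d - aX c) ^ 2)) := by
        simp only [dirDensity, ← hA]
        rfl
    _ = k * (1 + n * w ^ 2) * (A * c2 / A) + k * (2 * q * n * w ^ 2 - 2 * q * w) * (q / A) +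
        k * (n * (n - 1) * w ^ 2 - 2 * n * w) * ((q ^ 2 + A * c2) / (A * (A + 1))) +
        k * (q ^ 2 * w ^ 2) * 1 := by
        simp only [hpt]
        rw [integral_add (((i2.const_mul _).fun_add (i1.const_mul _)).fun_add (iq.const_mul _))
            (i0.const_mul _),
          integral_add ((i2.const_mul _).fun_add (i1.const_mul _)) (iq.const_mul _),
          integral_add (i2.const_mul _) (i1.const_mul _)]
        simp only [integral_const_mul, e0, e1, e2, eq]
    _ = _ := by
        simp only [q, hw]
        field_simp
        ring
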